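/- Let N ≥ 1 and p > 1, and let u_0 ∈ L^1(ℝ^N). Suppose v : ℝ^N × (0, ∞) → ℝ satisfies: (a) for each t > 0, x ↦ v(x, t) is differentiable; (b) for every t > 0 and almost every x ∈ ℝ^N, v(x, t) = (P_t * u_0)(x) + ∫_0^t (P_{t−τ} * |∇v(·, τ)|^p)(x) dτ; (c) for every q ∈ [1, ∞] and j ∈ {0, 1}, sup_{t > 0} (1+t)^{N(1 − 1/q) + j} ‖∇^j v(·, t)‖_{L^q(ℝ^N)} < ∞ (where ∇^0 v = v and ∇^1 v = ∇v). Then: (1) the integral ∫_0^∞ ∫_{ℝ^N} ‖∇_x v(x, τ)‖^p dx dτ is finite, so the constant C_* := ∫_{ℝ^N} u_0(x) dx + ∫_0^∞ ∫_{ℝ^N} ‖∇_x v(x, τ)‖^p dx dτ is well defined; and (2) there exists C > 0 such that for all t ≥ 1: | ∫_{ℝ^N} v(x, t) dx − C_* | ≤ C t^{−(N+1)(p−1)}. -/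

import Mathlib

open MeasureTheory Real Filter ENNReal

/-- The normalizing constant of the Poisson kernel on `ℝ^N`. -/
noncomputable def cN (N : ℕ) : ℝ :=
  Real.Gamma (((N : ℝ) + 1) / 2) / Real.pi ^ (((N : ℝ) + 1) / 2)

/-- The Poisson kernel `P(x) = c_N (1 + ‖x‖²)^{-(N+1)/2}` on `ℝ^N`. -/
noncomputable def P (N : ℕ) (x : EuclideanSpace ℝ (Fin N)) : ℝ :=
  cN N * (1 + ‖x‖ ^ 2) ^ (-(((N : ℝ) + 1) / 2))

/-- The dilated Poisson kernel `P_t(x) = t^{-N} P(x/t)`. -/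
noncomputable def Pt (N : ℕ) (t : ℝ) (x : EuclideanSpace ℝ (Fin N)) : ℝ :=
  t ^ (-(N : ℝ)) * P N (t⁻¹ • x)


section kernel
open scoped FourierTransform Topology
variable {N : ℕ}
local notation "𝔼" => EuclideanSpace ℝ (Fin N)

theorem cN_pos (N : ℕ) : 0 < cN N := by
  unfold cN
  have : 0 < Real.Gamma (((N : ℝ) + 1) / 2) := Real.Gamma_pos_of_pos (by positivity)
  positivity

theorem P_pos (x : 𝔼) : 0 < P N x := by
  unfold P
  have := cN_pos N
  positivity

theorem P_le (x : 𝔼) : P N x ≤ cN N := by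
  unfold P
  have := cN_pos N
  have h : (1 + ‖x‖ ^ 2) ^ (-(((N : ℝ) + 1) / 2)) ≤ 1 := by
    apply Real.rpow_le_one_of_one_le_of_nonpos
    · nlinarith [sq_nonneg ‖x‖]
    · have : (0:ℝ) ≤ N := by positivity
      linarith
  nlinarith

theorem P_cont : Continuous (P N) := by
  unfold P
  refine continuous_const.mul (Continuous.rpow_const (by fun_prop) ?_)
  intro x; left; positivity

theorem P_int : Integrable (P N) := by
  unfold P
  refine Integrable.const_mul ?_ _
  have := integrable_rpow_neg_one_add_norm_sq (E := 𝔼) (μ := volume) (r := (N:ℝ) + 1) (by simp)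
  convert this using 3
  ring

/-- subordination weight -/
noncomputable def wt (N : ℕ) (l : ℝ) : ℝ :=
  (Real.pi ^ (((N : ℝ) + 1) / 2))⁻¹ * (l ^ (((N : ℝ) + 1) / 2 - 1) * Real.exp (-(1 * l)))

theorem P_sub (x : 𝔼) :
    P N x = ∫ l in Set.Ioi (0:ℝ), wt N l * Real.exp (-l * ‖x‖ ^ 2) := by
  have h := Real.integral_rpow_mul_exp_neg_mul_Ioi (a := ((N : ℝ) + 1) / 2) (r := 1 + ‖x‖^2)
    (by positivity) (by positivity)
  have : ∀ l : ℝ, wt N l * Real.exp (-l * ‖x‖ ^ 2) = (Real.pi ^ (((N : ℝ) + 1) / 2))⁻¹ *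
     (l ^ (((N : ℝ) + 1) / 2 - 1) * Real.exp (-((1 + ‖x‖^2) * l))) := by
    intro l
    unfold wt
    rw [mul_assoc, mul_assoc, ← Real.exp_add]
    ring_nf
  simp_rw [this]
  rw [integral_const_mul, h]
  unfold P cN
  rw [Real.rpow_neg (by positivity), one_div, Real.inv_rpow (by positivity)]
  field_simp

theorem wt_meas : Measurable (wt N) := by
  unfold wt
  fun_prop

theorem wt_pos (l : ℝ) (hl : 0 < l) : 0 < wt N l := by
  unfold wt; positivity

theorem gamma_int (a : ℝ) (ha : 0 < a) (c : ℝ) :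
    Integrable (fun l : ℝ => c * (l ^ (a - 1) * Real.exp (-(1 * l)))) (volume.restrict (Set.Ioi 0)) := by
  refine Integrable.const_mul ?_ _
  have := Real.GammaIntegral_convergent ha
  refine this.congr_fun ?_ measurableSet_Ioi
  intro x _
  simp [mul_comm]

theorem wt_scale (l : ℝ) (hl : 0 < l) : wt N l * (π / l) ^ ((N : ℝ) / 2) =
    (Real.pi ^ ((1:ℝ) / 2))⁻¹ * (l ^ ((1:ℝ) / 2 - 1) * Real.exp (-(1 * l))) := by
  unfold wt
  have h1 : ((N : ℝ) + 1) / 2 = (N : ℝ)/2 + 1/2 := by ring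
  have h2 : ((N : ℝ) + 1) / 2 - 1 = (N : ℝ)/2 + (1/2 - 1) := by ring
  rw [h2, h1, Real.rpow_add pi_pos, Real.rpow_add hl, Real.div_rpow pi_pos.le hl.le]
  field_simp

theorem sub_int : Integrable (fun q : 𝔼 × ℝ => wt N q.2 * Real.exp (-q.2 * ‖q.1‖ ^ 2))
    (volume.prod (volume.restrict (Set.Ioi (0:ℝ)))) := by
  have hm : AEStronglyMeasurable (fun q : 𝔼 × ℝ => wt N q.2 * Real.exp (-q.2 * ‖q.1‖ ^ 2))
    (volume.prod (volume.restrict (Set.Ioi (0:ℝ)))) := by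
    apply Measurable.aestronglyMeasurable
    have := wt_meas (N := N)
    fun_prop
  rw [integrable_prod_iff hm]
  constructor
  · refine Eventually.of_forall fun x => ?_
    by_contra h
    have := P_sub x
    rw [integral_undef h] at this
    exact (P_pos x).ne' this
  · refine P_int.congr (Eventually.of_forall fun x => ?_)
    simp only
    rw [P_sub x]
    refine setIntegral_congr_fun measurableSet_Ioi fun l hl => ?_
    rw [Real.norm_of_nonneg]
    have := wt_pos (N := N) l hl
    positivity

/-- Fourier transform of the Poisson kernel -/
noncomputable def PF (N : ℕ) (ξ : EuclideanSpace ℝ (Fin N)) : ℝ :=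
  ∫ l in Set.Ioi (0:ℝ), ((Real.pi ^ ((1:ℝ) / 2))⁻¹ * (l ^ ((1:ℝ) / 2 - 1) * Real.exp (-(1 * l))))
    * Real.exp (-π ^ 2 * ‖ξ‖ ^ 2 / l)

theorem P_fourier (ξ : 𝔼) : 𝓕 (fun x : 𝔼 => (P N x : ℂ)) ξ = (PF N ξ : ℂ) := by
  rw [Real.fourier_eq]
  have h1 : ∀ x : 𝔼, 𝐞 (-inner ℝ x ξ) • (P N x : ℂ) =
      ∫ l in Set.Ioi (0:ℝ), 𝐞 (-inner ℝ x ξ) • ((wt N l * Real.exp (-l * ‖x‖ ^ 2) : ℝ) : ℂ) := by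
    intro x
    simp only [Circle.smul_def]
    rw [integral_smul, P_sub, integral_complex_ofReal]
  simp_rw [h1]
  rw [integral_integral_swap]
  · unfold PF
    rw [← integral_complex_ofReal]
    refine setIntegral_congr_fun measurableSet_Ioi fun l hl => ?_
    have hl : 0 < l := hl
    have hg := fourier_gaussian_innerProductSpace (V := 𝔼) (b := (l:ℂ)) (by simpa using hl) ξ
    rw [Real.fourier_eq] at hg
    have h2 : ∀ x : 𝔼, 𝐞 (-inner ℝ x ξ) • ((wt N l * Real.exp (-l * ‖x‖ ^ 2) : ℝ) : ℂ)
      = (wt N l : ℂ) * (𝐞 (-inner ℝ x ξ) • Complex.exp (-(l:ℂ) * ‖x‖ ^ 2)) := by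
      intro x
      rw [Complex.ofReal_mul, mul_smul_comm]
      push_cast
      rfl
    simp_rw [h2]
    rw [integral_const_mul, hg, ← wt_scale (N := N) l hl]
    rw [Complex.ofReal_mul, Complex.ofReal_mul, Complex.ofReal_cpow (by positivity)]
    push_cast
    simp
    ring
  · have : Integrable (fun q : 𝔼 × ℝ => ((wt N q.2 * Real.exp (-q.2 * ‖q.1‖ ^ 2) : ℝ) : ℂ)) 
      (volume.prod (volume.restrict (Set.Ioi (0:ℝ)))) := sub_int.ofReal
    refine this.mono ?_ (Eventually.of_forall fun q => ?_)
    · refine AEStronglyMeasurable.smul ?_ this.1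
      apply Continuous.aestronglyMeasurable
      have := Real.continuous_fourierChar
      fun_prop
    · simp only [Function.uncurry]
      rw [Circle.norm_smul]

theorem PF_int1 (ξ : 𝔼) : Integrable (fun l : ℝ => ((Real.pi ^ ((1:ℝ) / 2))⁻¹ * (l ^ ((1:ℝ) / 2 - 1) * Real.exp (-(1 * l))))
    * Real.exp (-π ^ 2 * ‖ξ‖ ^ 2 / l)) (volume.restrict (Set.Ioi 0)) := by
  refine (gamma_int (1/2) (by norm_num) ((Real.pi ^ ((1:ℝ) / 2))⁻¹)).mono' ?_ ?_
  · apply Measurable.aestronglyMeasurable; fun_prop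
  · refine (ae_restrict_iff' measurableSet_Ioi).2 (Eventually.of_forall fun l hl => ?_)
    have hl : 0 < l := hl
    rw [Real.norm_of_nonneg (by positivity)]
    apply mul_le_of_le_one_right (by positivity)
    rw [Real.exp_le_one_iff]
    have : 0 ≤ π ^ 2 * ‖ξ‖ ^ 2 / l := by positivity
    rw [neg_mul, neg_div]; linarith

theorem PF_pos (ξ : 𝔼) : 0 < PF N ξ := by
  unfold PF
  rw [setIntegral_pos_iff_support_of_nonneg_ae]
  · have : Set.Ioi (0:ℝ) ⊆ (Function.support fun l : ℝ => ((Real.pi ^ ((1:ℝ) / 2))⁻¹ * (l ^ ((1:ℝ) / 2 - 1) * Real.exp (-(1 * l))))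
    * Real.exp (-π ^ 2 * ‖ξ‖ ^ 2 / l)) ∩ Set.Ioi 0 := by
      intro l hl
      refine ⟨?_, hl⟩
      have hl : 0 < l := hl
      simp only [Function.mem_support]
      positivity
    refine lt_of_lt_of_le ?_ (measure_mono this)
    simp
  · refine (ae_restrict_iff' measurableSet_Ioi).2 (Eventually.of_forall fun l hl => ?_)
    have hl : 0 < l := hl
    simp only [Pi.zero_apply]
    positivity
  · exact PF_int1 ξ

theorem PF_zero : PF N 0 = 1 := by
  unfold PF
  simp only [norm_zero, ne_eq, OfNat.ofNat_ne_zero, not_false_eq_true, zero_pow, mul_zero, zero_div, Real.exp_zero, mul_one]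
  rw [integral_const_mul, Real.integral_rpow_mul_exp_neg_mul_Ioi (by norm_num) (by norm_num), Real.Gamma_one_half_eq, Real.sqrt_eq_rpow]
  simp
  apply inv_mul_cancel₀
  positivity

theorem P_integral : ∫ x : 𝔼, P N x = 1 := by
  have h := P_fourier (N := N) 0
  rw [Real.fourier_eq, PF_zero] at h
  simp only [inner_zero_right, neg_zero, AddChar.map_zero_eq_one, one_smul] at h
  rw [integral_complex_ofReal] at h
  exact_mod_cast h

theorem PF_cont : Continuous (PF N) := by
  have h : Continuous (𝓕 (fun x : 𝔼 => (P N x : ℂ))) :=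
    VectorFourier.fourierIntegral_continuous Real.continuous_fourierChar
      (by exact continuous_inner) (P_int (N := N)).ofReal
  have h2 : PF N = fun ξ => (𝓕 (fun x : 𝔼 => (P N x : ℂ)) ξ).re := by
    ext ξ; rw [P_fourier]; simp
  rw [h2]
  exact Complex.continuous_re.comp h

theorem PF_int : Integrable (PF N) := by
  have hm : AEStronglyMeasurable (fun q : 𝔼 × ℝ => ((Real.pi ^ ((1:ℝ) / 2))⁻¹ * (q.2 ^ ((1:ℝ) / 2 - 1) * Real.exp (-(1 * q.2))))
    * Real.exp (-π ^ 2 * ‖q.1‖ ^ 2 / q.2))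
    (volume.prod (volume.restrict (Set.Ioi (0:ℝ)))) := by
    apply Measurable.aestronglyMeasurable
    fun_prop
  refine Integrable.integral_prod_left (μ := volume) (ν := volume.restrict (Set.Ioi (0:ℝ))) (f := fun q : 𝔼 × ℝ => ((Real.pi ^ ((1:ℝ) / 2))⁻¹ * (q.2 ^ ((1:ℝ) / 2 - 1) * Real.exp (-(1 * q.2))))
    * Real.exp (-π ^ 2 * ‖q.1‖ ^ 2 / q.2)) ?_
  rw [integrable_prod_iff' hm]
  have hgi : ∀ l : ℝ, 0 < l → ∫ x : 𝔼, rexp (-π ^ 2 * ‖x‖ ^ 2 / l) = (π / (π^2 / l)) ^ ((N:ℝ) / 2) := by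
    intro l hl
    have := GaussianFourier.integral_rexp_neg_mul_sq_norm (V := 𝔼) (b := π ^ 2 / l) (by positivity)
    rw [finrank_euclideanSpace_fin] at this
    rw [← this]
    congr 1; ext x; congr 1; ring
  constructor
  · refine (ae_restrict_iff' measurableSet_Ioi).2 (Eventually.of_forall fun l hl => ?_)
    have hl : 0 < l := hl
    dsimp only
    refine Integrable.const_mul (f := fun x : 𝔼 => rexp (-π ^ 2 * ‖x‖ ^ 2 / l)) ?_ _
    by_contra h
    have := hgi l hl
    rw [integral_undef h] at this
    have h3 : 0 < (π / (π^2 / l)) ^ ((N:ℝ) / 2) := by positivity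
    exact h3.ne this
  · refine (gamma_int (((N:ℝ) + 1)/2) (by positivity) ((Real.pi ^ ((1:ℝ) / 2))⁻¹ * (π ^ ((N:ℝ)/2))⁻¹)).congr ?_
    refine (ae_restrict_iff' measurableSet_Ioi).2 (Eventually.of_forall fun l hl => ?_)
    have hl : 0 < l := hl
    have h4 : ∀ x : 𝔼, ‖((Real.pi ^ ((1:ℝ) / 2))⁻¹ * (l ^ ((1:ℝ) / 2 - 1) * Real.exp (-(1 * l))))
    * Real.exp (-π ^ 2 * ‖x‖ ^ 2 / l)‖ = ((Real.pi ^ ((1:ℝ) / 2))⁻¹ * (l ^ ((1:ℝ) / 2 - 1) * Real.exp (-(1 * l))))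
    * Real.exp (-π ^ 2 * ‖x‖ ^ 2 / l) := by
      intro x
      rw [Real.norm_of_nonneg (by positivity)]
    simp only [h4]
    rw [integral_const_mul, hgi l hl]
    have h5 : π / (π^2 / l) = l / π := by field_simp
    have h2 : ((N : ℝ) + 1) / 2 - 1 = (N : ℝ)/2 + (1/2 - 1) := by ring
    rw [h5, h2, Real.rpow_add hl, Real.div_rpow hl.le pi_pos.le]
    field_simp

theorem PF_le (ξ : 𝔼) : PF N ξ ≤ 1 := by
  rw [← PF_zero (N := N)]
  unfold PF
  refine integral_mono_ae (PF_int1 ξ) (PF_int1 0) ?_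
  refine (ae_restrict_iff' measurableSet_Ioi).2 (Eventually.of_forall fun l hl => ?_)
  have hl : 0 < l := hl
  simp only
  have : 0 ≤ π ^ 2 * ‖ξ‖ ^ 2 / l := by positivity
  refine mul_le_mul_of_nonneg_left ?_ (by positivity)
  rw [Real.exp_le_exp]
  rw [neg_mul, neg_div]
  simpa using this

end kernel

section conv
open scoped FourierTransform Topology
variable {N : ℕ}
local notation "𝔼" => EuclideanSpace ℝ (Fin N)

theorem Pt_pos {s : ℝ} (hs : 0 < s) (x : 𝔼) : 0 < Pt N s x := by
  unfold Pt
  have := P_pos (s⁻¹ • x)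
  positivity

theorem Pt_cont (s : ℝ) : Continuous (Pt N s) := by
  unfold Pt
  have := P_cont (N := N)
  fun_prop

theorem Pt_le {s : ℝ} (hs : 0 < s) (x : 𝔼) : Pt N s x ≤ s ^ (-(N:ℝ)) * cN N := by
  unfold Pt
  exact mul_le_mul_of_nonneg_left (P_le _) (by positivity)

theorem Pt_int {s : ℝ} (hs : 0 < s) : Integrable (Pt N s) := by
  unfold Pt
  exact (P_int.comp_smul (inv_ne_zero hs.ne')).const_mul _

theorem Pt_integral {s : ℝ} (hs : 0 < s) : ∫ x, Pt N s x = 1 := by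
  unfold Pt
  rw [integral_const_mul, Measure.integral_comp_inv_smul, P_integral, finrank_euclideanSpace_fin,
    Real.rpow_neg hs.le, Real.rpow_natCast, abs_of_pos (by positivity)]
  simp
  exact inv_mul_cancel₀ (by positivity)

theorem Pt_fourier {s : ℝ} (hs : 0 < s) (ξ : 𝔼) :
    𝓕 (fun x : 𝔼 => (Pt N s x : ℂ)) ξ = (PF N (s • ξ) : ℂ) := by
  rw [← P_fourier, Real.fourier_eq, Real.fourier_eq]
  have h := Measure.integral_comp_inv_smul (volume : Measure 𝔼)
    (fun x : 𝔼 => 𝐞 (-inner ℝ x (s • ξ)) • (P N x : ℂ)) s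
  have h1 : ∀ x : 𝔼, 𝐞 (-inner ℝ x ξ) • (Pt N s x : ℂ) = ((s ^ (-(N:ℝ)) : ℝ) : ℂ) *
      (𝐞 (-inner ℝ (s⁻¹ • x) (s • ξ)) • (P N (s⁻¹ • x) : ℂ)) := by
    intro x
    rw [inner_smul_left, inner_smul_right]
    unfold Pt
    rw [Complex.ofReal_mul, ← mul_smul_comm]
    simp [hs.ne']
  simp_rw [h1]
  rw [integral_const_mul, h, finrank_euclideanSpace_fin,
    Real.rpow_neg hs.le, Real.rpow_natCast, abs_of_pos (by positivity)]
  rw [Complex.real_smul, ← mul_assoc, ← Complex.ofReal_mul, inv_mul_cancel₀ (by positivity)]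
  simp

/-- Poisson convolution -/
noncomputable def Cv (s : ℝ) (g : 𝔼 → ℝ) (x : 𝔼) : ℝ := ∫ y, Pt N s (x - y) * g y

theorem Cv_eq_conv (s : ℝ) (g : 𝔼 → ℝ) :
    Cv s g = convolution (Pt N s) g (ContinuousLinearMap.mul ℝ ℝ) volume := by
  ext x
  rw [convolution_mul_swap]
  rfl

theorem Cv_int {s : ℝ} (hs : 0 < s) {g : 𝔼 → ℝ} (hg : Integrable g) : Integrable (Cv s g) := by
  rw [Cv_eq_conv]
  exact (Pt_int hs).integrable_convolution _ hg

theorem Cv_integral {s : ℝ} (hs : 0 < s) {g : 𝔼 → ℝ} (hg : Integrable g) :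
    ∫ x, Cv s g x = ∫ x, g x := by
  rw [Cv_eq_conv, integral_convolution _ (Pt_int hs) hg, Pt_integral hs]
  simp

theorem Cv_integrand {s : ℝ} (hs : 0 < s) {g : 𝔼 → ℝ} (hg : Integrable g) (x : 𝔼) :
    Integrable (fun y => Pt N s (x - y) * g y) := by
  refine hg.bdd_mul (c := s ^ (-(N:ℝ)) * cN N) ?_ (Eventually.of_forall fun y => ?_)
  · have := Pt_cont (N := N) s
    exact (by fun_prop : Continuous fun y => Pt N s (x - y)).aestronglyMeasurable
  · rw [Real.norm_of_nonneg (Pt_pos hs _).le]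
    exact Pt_le hs _

theorem Cv_fourier {s : ℝ} (hs : 0 < s) {g : 𝔼 → ℝ} (hg : Integrable g) (ξ : 𝔼) :
    𝓕 (fun x => (Cv s g x : ℂ)) ξ = (PF N (s • ξ) : ℂ) * 𝓕 (fun x => (g x : ℂ)) ξ := by
  have h := Real.fourier_mul_convolution_eq (f₁ := fun x : 𝔼 => (Pt N s x : ℂ))
    (f₂ := fun x : 𝔼 => (g x : ℂ)) (Pt_int hs).ofReal hg.ofReal ξ
  rw [Pt_fourier hs] at h
  rw [← h]
  have hh : (fun x => (Cv s g x : ℂ)) = convolution (fun x : 𝔼 => (Pt N s x : ℂ))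
      (fun x : 𝔼 => (g x : ℂ)) (ContinuousLinearMap.mul ℂ ℂ) volume := by
    funext x
    rw [convolution_mul_swap]
    unfold Cv
    rw [← integral_complex_ofReal]
    simp
  rw [hh]

theorem Cv_cont_param {X : Type*} [TopologicalSpace X] [FirstCountableTopology X]
    {g : 𝔼 → ℝ} (hg : Integrable g) (σ : X → ℝ) (hσ : Continuous σ) (c : ℝ) (hc : 0 < c)
    (hσc : ∀ a, c ≤ σ a) (ξ : X → 𝔼) (hξ : Continuous ξ) :
    Continuous (fun a => Cv (σ a) g (ξ a)) := by
  unfold Cv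
  refine continuous_of_dominated (bound := fun y => c ^ (-(N:ℝ)) * cN N * ‖g y‖) ?_ ?_ ?_ ?_
  · intro a
    exact (Cv_integrand (hc.trans_le (hσc a)) hg (ξ a)).1
  · intro a
    refine Eventually.of_forall fun y => ?_
    rw [norm_mul, Real.norm_of_nonneg (Pt_pos (hc.trans_le (hσc a)) _).le]
    refine mul_le_mul_of_nonneg_right ((Pt_le (hc.trans_le (hσc a)) _).trans ?_) (norm_nonneg _)
    refine mul_le_mul_of_nonneg_right ?_ (cN_pos N).le
    exact Real.rpow_le_rpow_of_nonpos hc (hσc a) (by simp)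
  · exact hg.norm.const_mul _
  · refine Eventually.of_forall fun y => ?_
    unfold Pt
    have hP := P_cont (N := N)
    have hne : ∀ a, σ a ≠ 0 := fun a => (hc.trans_le (hσc a)).ne'
    have h1 : Continuous fun a => (σ a)⁻¹ := hσ.inv₀ hne
    have h2 : Continuous fun a => (σ a) ^ (-(N:ℝ)) := hσ.rpow_const (fun a => Or.inl (hne a))
    fun_prop

theorem Cv_cont {s : ℝ} (hs : 0 < s) {g : 𝔼 → ℝ} (hg : Integrable g) : Continuous (Cv s g) :=
  Cv_cont_param hg (fun _ => s) continuous_const s hs (fun _ => le_rfl) id continuous_id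

theorem fourier_cont {g : 𝔼 → ℝ} (hg : Integrable g) :
    Continuous (𝓕 (fun x : 𝔼 => (g x : ℂ))) :=
  VectorFourier.fourierIntegral_continuous Real.continuous_fourierChar
      (by exact continuous_inner) hg.ofReal

theorem Cv_inv {s : ℝ} (hs : 0 < s) {g : 𝔼 → ℝ} (hg : Integrable g) (x : 𝔼) :
    (Cv s g x : ℂ) = ∫ ξ, 𝐞 (inner ℝ ξ x) • ((PF N (s • ξ) : ℂ) * 𝓕 (fun x => (g x : ℂ)) ξ) := by
  have hF : 𝓕 (fun x => (Cv s g x : ℂ)) =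
      fun ξ => (PF N (s • ξ) : ℂ) * 𝓕 (fun x => (g x : ℂ)) ξ := by
    ext ξ; exact Cv_fourier hs hg ξ
  have hc : Continuous (fun x => (Cv s g x : ℂ)) := Complex.continuous_ofReal.comp (Cv_cont hs hg)
  have hi : Integrable (fun ξ : 𝔼 => (PF N (s • ξ) : ℂ) * 𝓕 (fun x => (g x : ℂ)) ξ) := by
    refine Integrable.mul_bdd (c := ∫ x, ‖(g x : ℂ)‖) ?_ ?_ ?_
    · exact ((PF_int (N := N)).comp_smul hs.ne').ofReal
    · exact (fourier_cont hg).aestronglyMeasurable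
    · refine Eventually.of_forall fun ξ => ?_
      exact VectorFourier.norm_fourierIntegral_le_integral_norm _ _ _ _ _
  have h := hc.fourierInv_fourier_eq (Cv_int hs hg).ofReal (by rw [hF]; exact hi)
  have h2 := congrFun h x
  rw [hF, Real.fourierInv_eq] at h2
  exact h2.symm

theorem Cv_nonneg {s : ℝ} (hs : 0 < s) {g : 𝔼 → ℝ} (hg : ∀ x, 0 ≤ g x) (x : 𝔼) : 0 ≤ Cv s g x :=
  integral_nonneg fun y => mul_nonneg (Pt_pos hs _).le (hg y)

theorem Cv_le {s : ℝ} (hs : 0 < s) {g : 𝔼 → ℝ} (hg : Integrable g) {M : ℝ}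
    (hM : ∀ᵐ x, g x ≤ M) (x : 𝔼) : Cv s g x ≤ M := by
  have h1 : Cv s g x ≤ ∫ y, Pt N s (x - y) * M := by
    refine integral_mono_ae (Cv_integrand hs hg x) (((Pt_int hs).comp_sub_left x).mul_const _) ?_
    filter_upwards [hM] with y hy
    exact mul_le_mul_of_nonneg_left hy (Pt_pos hs _).le
  rwa [integral_mul_const, integral_sub_left_eq_self (Pt N s) volume x, Pt_integral hs, one_mul] at h1

theorem Cv_zero {s : ℝ} (hs : 0 < s) {g : 𝔼 → ℝ} (hg : Integrable g) (hg0 : ∀ x, 0 ≤ g x)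
    (x : 𝔼) (h : Cv s g x = 0) (x' : 𝔼) : Cv s g x' = 0 := by
  unfold Cv at h
  rw [integral_eq_zero_iff_of_nonneg (fun y => mul_nonneg (Pt_pos hs _).le (hg0 y))
    (Cv_integrand hs hg x)] at h
  unfold Cv
  refine integral_eq_zero_of_ae ?_
  filter_upwards [h] with y hy
  simp only [Pi.zero_apply, mul_eq_zero, (Pt_pos hs (x - y)).ne', false_or] at hy
  simp [hy]

end conv

section carath
open scoped FourierTransform Topology
variable {X Y : Type*} [TopologicalSpace X] [TopologicalSpace.MetrizableSpace X]
  [MeasurableSpace X] [SecondCountableTopology X] [OpensMeasurableSpace X] [Nonempty X]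
  [MeasurableSpace Y] {G : Type*} [NormedAddCommGroup G]

theorem carath (μ : Measure Y) (f : X → Y → G)
    (hc : ∀ᵐ y ∂μ, Continuous fun x => f x y) (hm : ∀ x, AEStronglyMeasurable (f x) μ) :
    ∃ f' : X → Y → G, StronglyMeasurable (Function.uncurry f') ∧
      ∀ᵐ y ∂μ, ∀ x, f x y = f' x y := by
  classical
  let d := TopologicalSpace.denseSeq X
  have hd : DenseRange d := TopologicalSpace.denseRange_denseSeq X
  have hall : ∀ᵐ y ∂μ, (Continuous fun x => f x y) ∧ ∀ n, f (d n) y = (hm (d n)).mk _ y :=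
    hc.and (ae_all_iff.2 fun n => (hm (d n)).ae_eq_mk)
  obtain ⟨S, hSsub, hSm, hSμ⟩ := exists_measurable_superset_of_null (ae_iff.1 hall)
  have hS : ∀ y, y ∉ S →
      (Continuous fun x => f x y) ∧ ∀ n, f (d n) y = (hm (d n)).mk _ y := by
    intro y hy
    by_contra h
    exact hy (hSsub h)
  refine ⟨fun x => Sᶜ.indicator (f x), ?_, ?_⟩
  · have hcont : ∀ y, Continuous fun x => Sᶜ.indicator (f x) y := by
      intro y
      by_cases hy : y ∈ S
      · simp only [Set.indicator, Set.mem_compl_iff, hy, not_true, if_false]; exact continuous_const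
      · simp only [Set.indicator, Set.mem_compl_iff, hy, not_false_iff, if_true]; exact (hS y hy).1
    refine stronglyMeasurable_uncurry_of_continuous_of_stronglyMeasurable hcont ?_
    have hdm : ∀ n, StronglyMeasurable (Sᶜ.indicator (f (d n))) := by
      intro n
      have : Sᶜ.indicator (f (d n)) = Sᶜ.indicator ((hm (d n)).mk _) := by
        ext y
        by_cases hy : y ∈ S
        · simp [hy]
        · simp [hy, (hS y hy).2 n]
      rw [this]
      exact (hm (d n)).stronglyMeasurable_mk.indicator hSm.compl
    intro x
    obtain ⟨u, hu, hux⟩ := mem_closure_iff_seq_limit.1 (hd x)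
    choose k hk using hu
    refine stronglyMeasurable_of_tendsto (u := atTop) (f := fun n => Sᶜ.indicator (f (u n))) ?_ ?_
    · intro n; rw [← hk n]; exact hdm _
    · rw [tendsto_pi_nhds]
      intro y
      exact ((hcont y).tendsto x).comp hux
  · have : ∀ᵐ y ∂μ, y ∉ S := by rw [ae_iff]; simpa using hSμ
    filter_upwards [this] with y hy x
    simp [hy]

end carath

section boot
open scoped FourierTransform Topology
variable {N : ℕ}
local notation "𝔼" => EuclideanSpace ℝ (Fin N)

/-- weak measurability of the family `g` on `(0,t)` -/
def GoodT (g : ℝ → 𝔼 → ℝ) (t : ℝ) : Prop :=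
  ∀ ξ : 𝔼, AEStronglyMeasurable (fun τ => 𝓕 (fun x => (g τ x : ℂ)) ξ)
    (volume.restrict (Set.Ioo 0 t))

theorem ae_Ioo (t : ℝ) : ∀ᵐ τ ∂(volume.restrict (Set.Ioo (0:ℝ) t)), 0 < τ ∧ τ < t :=
  (ae_restrict_iff' measurableSet_Ioo).2 (Eventually.of_forall fun _ h => h)

theorem good_of_meas {g : ℝ → 𝔼 → ℝ} (hg : ∀ τ, 0 < τ → Integrable (g τ)) {t : ℝ}
    (h : ∀ x : 𝔼, AEStronglyMeasurable (fun τ => Cv (t - τ) (g τ) x)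
      (volume.restrict (Set.Ioo 0 t))) : GoodT g t := by
  intro ξ
  obtain ⟨f', hf', hff⟩ := carath (volume.restrict (Set.Ioo 0 t))
    (fun (x : 𝔼) τ => Cv (t - τ) (g τ) x)
    (by
      filter_upwards [ae_Ioo t] with τ hτ
      exact Cv_cont (by linarith [hτ.2]) (hg τ hτ.1)) h
  have h1 : StronglyMeasurable (fun q : 𝔼 × ℝ => 𝐞 (-inner ℝ q.1 ξ) • (f' q.1 q.2 : ℂ)) := by
    refine StronglyMeasurable.smul ?_ ?_
    · have := Real.continuous_fourierChar
      exact (by fun_prop : Continuous fun q : 𝔼 × ℝ => ((𝐞 (-inner ℝ q.1 ξ) : Circle) : ℂ)).stronglyMeasurable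
    · exact Complex.continuous_ofReal.comp_stronglyMeasurable hf'
  have h2 : StronglyMeasurable fun τ => ∫ x : 𝔼, 𝐞 (-inner ℝ x ξ) • (f' x τ : ℂ) :=
    h1.integral_prod_left' (μ := volume)
  have h3 : Continuous fun τ : ℝ => ((PF N ((t - τ) • ξ) : ℝ) : ℂ) := by
    have := PF_cont (N := N)
    fun_prop
  refine AEStronglyMeasurable.congr (f := fun τ => (∫ x : 𝔼, 𝐞 (-inner ℝ x ξ) • (f' x τ : ℂ)) *
    ((PF N ((t - τ) • ξ) : ℝ) : ℂ)⁻¹) ?_ ?_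
  · refine (h2.aestronglyMeasurable).mul ?_
    exact (h3.measurable.inv).aestronglyMeasurable
  · filter_upwards [ae_Ioo t, hff] with τ hτ hx
    have h4 := Cv_fourier (s := t - τ) (by linarith [hτ.2]) (hg τ hτ.1) ξ
    rw [Real.fourier_eq] at h4
    simp only [hx] at h4
    rw [h4]
    have h5 : ((PF N ((t - τ) • ξ) : ℝ) : ℂ) ≠ 0 := by
      exact_mod_cast (PF_pos _).ne'
    field_simp

theorem meas_of_good {g : ℝ → 𝔼 → ℝ} (hg : ∀ τ, 0 < τ → Integrable (g τ)) {t : ℝ}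
    (h : GoodT g t) (x : 𝔼) : AEStronglyMeasurable (fun τ => Cv (t - τ) (g τ) x)
      (volume.restrict (Set.Ioo 0 t)) := by
  obtain ⟨f', hf', hff⟩ := carath (volume.restrict (Set.Ioo 0 t))
    (fun (ξ : 𝔼) τ => 𝓕 (fun x => (g τ x : ℂ)) ξ)
    (by
      filter_upwards [ae_Ioo t] with τ hτ
      exact fourier_cont (hg τ hτ.1)) h
  have h1 : StronglyMeasurable (fun q : 𝔼 × ℝ =>
      𝐞 (inner ℝ q.1 x) • (((PF N ((t - q.2) • q.1) : ℝ) : ℂ) * f' q.1 q.2)) := by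
    refine StronglyMeasurable.smul ?_ (StronglyMeasurable.mul ?_ ?_)
    · have := Real.continuous_fourierChar
      exact (by fun_prop : Continuous fun q : 𝔼 × ℝ => ((𝐞 (inner ℝ q.1 x) : Circle) : ℂ)).stronglyMeasurable
    · have := PF_cont (N := N)
      exact (by fun_prop : Continuous fun q : 𝔼 × ℝ =>
        ((PF N ((t - q.2) • q.1) : ℝ) : ℂ)).stronglyMeasurable
    · exact hf'
  have h2 : StronglyMeasurable fun τ => ∫ ξ : 𝔼,
      𝐞 (inner ℝ ξ x) • (((PF N ((t - τ) • ξ) : ℝ) : ℂ) * f' ξ τ) :=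
    h1.integral_prod_left' (μ := volume)
  refine AEStronglyMeasurable.congr (f := fun τ => (∫ ξ : 𝔼,
      𝐞 (inner ℝ ξ x) • (((PF N ((t - τ) • ξ) : ℝ) : ℂ) * f' ξ τ)).re) ?_ ?_
  · exact (Complex.continuous_re.comp_stronglyMeasurable h2).aestronglyMeasurable
  · filter_upwards [ae_Ioo t, hff] with τ hτ hx
    have h4 := Cv_inv (s := t - τ) (by linarith [hτ.2]) (hg τ hτ.1) x
    simp only [hx] at h4
    rw [← h4]
    simp

theorem Cv_cont_exp {u0 : 𝔼 → ℝ} (hu0 : Integrable u0) :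
    Continuous (Function.uncurry fun (a : ℝ) (x : 𝔼) => Cv (Real.exp a) u0 x) := by
  rw [continuous_iff_continuousAt]
  rintro ⟨a0, x0⟩
  have h := Cv_cont_param (X := ℝ × 𝔼) hu0 (fun q => max (Real.exp q.1) (Real.exp (a0 - 1)))
    (by fun_prop) (Real.exp (a0 - 1)) (Real.exp_pos _) (fun q => le_max_right _ _)
    (fun q => q.2) continuous_snd
  refine (h.continuousAt (x := (a0, x0))).congr ?_
  have : ∀ᶠ q : ℝ × 𝔼 in 𝓝 (a0, x0), a0 - 1 < q.1 :=
    continuous_fst.continuousAt.eventually (lt_mem_nhds (by simp))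
  filter_upwards [this] with q hq
  simp only [Function.uncurry]
  rw [max_eq_left (Real.exp_le_exp.2 hq.le)]

theorem norm_gradient_eq (f : 𝔼 → ℝ) (x : 𝔼) : ‖gradient f x‖ = ‖fderiv ℝ f x‖ := by
  unfold gradient
  simp

theorem free_meas {u0 : 𝔼 → ℝ} (hu0 : Integrable u0) (p : ℝ) (ξ : 𝔼) :
    AEStronglyMeasurable (fun τ : ℝ => 𝓕 (fun x : 𝔼 => ((‖gradient (Cv τ u0) x‖ ^ p : ℝ) : ℂ)) ξ)
      (volume.restrict (Set.Ioi 0)) := by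
  have h0 := measurable_fderiv_with_param ℝ (Cv_cont_exp hu0)
  have h1 : StronglyMeasurable (fun q : ℝ × 𝔼 => 𝐞 (-inner ℝ q.2 ξ) •
      ((‖fderiv ℝ (Cv (Real.exp q.1) u0) q.2‖ ^ p : ℝ) : ℂ)) := by
    refine StronglyMeasurable.smul ?_ ?_
    · have := Real.continuous_fourierChar
      exact (by fun_prop : Continuous fun q : ℝ × 𝔼 => ((𝐞 (-inner ℝ q.2 ξ) : Circle) : ℂ)).stronglyMeasurable
    · refine Complex.continuous_ofReal.comp_stronglyMeasurable ?_
      exact (h0.norm.pow_const p).stronglyMeasurable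
  have h2 := h1.integral_prod_right' (ν := volume)
  refine AEStronglyMeasurable.congr
    (h2.comp_measurable Real.measurable_log).aestronglyMeasurable ?_
  refine (ae_restrict_iff' measurableSet_Ioi).2 (Eventually.of_forall fun τ hτ => ?_)
  simp only [Function.comp, norm_gradient_eq]
  rw [Real.fourier_eq, Real.exp_log hτ]

theorem bootstrap {g : ℝ → 𝔼 → ℝ} (hg : ∀ τ, 0 < τ → Integrable (g τ))
    {u0 : 𝔼 → ℝ} (hu0 : Integrable u0) (p : ℝ)
    (hd : ∀ t, 0 < t → (∀ x : 𝔼, AEStronglyMeasurable (fun τ => Cv (t - τ) (g τ) x)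
      (volume.restrict (Set.Ioo 0 t))) ∨ g t = fun x => ‖gradient (Cv t u0) x‖ ^ p)
    (t : ℝ) : GoodT g t := by
  let S : Set ℝ := {s | 0 < s ∧ GoodT g s}
  have hmono : ∀ s s', s' ≤ s → GoodT g s → GoodT g s' := fun s s' h hs ξ =>
    (hs ξ).mono_measure (Measure.restrict_mono (Set.Ioo_subset_Ioo_right h) le_rfl)
  have hSord : S.OrdConnected := by
    refine ⟨fun a ha b hb c hc => ⟨ha.1.trans_le hc.1, hmono b c hc.2 hb.2⟩⟩
  have hSm : MeasurableSet S := hSord.measurableSet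
  intro ξ
  have h1 : AEStronglyMeasurable (fun τ => 𝓕 (fun x => (g τ x : ℂ)) ξ) (volume.restrict S) := by
    have hsub : S ⊆ (⋃ q : {q : ℚ // (q : ℝ) ∈ S}, Set.Ioo (0:ℝ) (q : ℚ)) ∪ {sSup S} := by
      intro a ha
      by_cases hmax : ∃ b ∈ S, a < b
      · obtain ⟨b, hb, hab⟩ := hmax
        obtain ⟨q, hq1, hq2⟩ := exists_rat_btwn hab
        left
        rw [Set.mem_iUnion]
        exact ⟨⟨q, hSord.out ha hb ⟨hq1.le, hq2.le⟩⟩, ha.1, hq1⟩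
      · right
        push Not at hmax
        have : IsGreatest S a := ⟨ha, fun b hb => hmax b hb⟩
        exact this.csSup_eq.symm
    refine AEStronglyMeasurable.mono_set hsub ?_
    rw [aestronglyMeasurable_union_iff]
    constructor
    · rw [aestronglyMeasurable_iUnion_iff]
      rintro ⟨q, hq⟩
      exact hq.2 ξ
    · rw [Measure.restrict_singleton]
      simp
  have h2 : AEStronglyMeasurable (fun τ => 𝓕 (fun x => (g τ x : ℂ)) ξ)
      (volume.restrict (Set.Ioi 0 \ S)) := by
    refine ((free_meas hu0 p ξ).mono_set Set.sdiff_subset).congr ?_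
    refine (ae_restrict_iff' (measurableSet_Ioi.diff hSm)).2 (Eventually.of_forall fun τ hτ => ?_)
    have : g τ = fun x => ‖gradient (Cv τ u0) x‖ ^ p := by
      rcases hd τ hτ.1 with h | h
      · exact absurd ⟨hτ.1, good_of_meas hg h⟩ hτ.2
      · exact h
    simp only [this]
  refine AEStronglyMeasurable.mono_set (t := S ∪ (Set.Ioi 0 \ S)) ?_ ?_
  · intro a ha
    by_cases h : a ∈ S
    · left; exact h
    · right; exact ⟨ha.1, h⟩
  · rw [aestronglyMeasurable_union_iff]
    exact ⟨h1, h2⟩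

theorem dichotomy {g : ℝ → 𝔼 → ℝ} (hg : ∀ τ, 0 < τ → Integrable (g τ))
    (hg0 : ∀ τ x, 0 ≤ g τ x) {M : ℝ} (hM : ∀ τ, 0 < τ → ∀ᵐ x, g τ x ≤ M)
    {t : ℝ} (ht : 0 < t) {w w0 : 𝔼 → ℝ} (hw : Continuous w) (hw0 : Continuous w0)
    (hf : ∀ᵐ x, w x = w0 x + ∫ τ in (0:ℝ)..t, Cv (t - τ) (g τ) x) :
    (∀ x : 𝔼, AEStronglyMeasurable (fun τ => Cv (t - τ) (g τ) x)
      (volume.restrict (Set.Ioo 0 t))) ∨ w = w0 := by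
  set μ := volume.restrict (Set.Ioo (0:ℝ) t) with hμ
  have hintegral : ∀ x, (∫ τ in (0:ℝ)..t, Cv (t - τ) (g τ) x) = ∫ τ, Cv (t - τ) (g τ) x ∂μ := by
    intro x
    rw [intervalIntegral.integral_of_le ht.le, hμ, restrict_Ioo_eq_restrict_Ioc]
  simp_rw [hintegral] at hf
  have hb : ∀ x, ∀ᵐ τ ∂μ, ‖Cv (t - τ) (g τ) x‖ ≤ M := by
    intro x
    filter_upwards [ae_Ioo t] with τ hτ
    rw [Real.norm_of_nonneg (Cv_nonneg (by linarith [hτ.2]) (hg0 τ) x)]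
    exact Cv_le (by linarith [hτ.2]) (hg τ hτ.1) (hM τ hτ.1) x
  have hc : ∀ x, ∀ u : ℕ → 𝔼, Tendsto u atTop (𝓝 x) → ∀ᵐ τ ∂μ,
      Tendsto (fun n => Cv (t - τ) (g τ) (u n)) atTop (𝓝 (Cv (t - τ) (g τ) x)) := by
    intro x u hu
    filter_upwards [ae_Ioo t] with τ hτ
    exact ((Cv_cont (by linarith [hτ.2]) (hg τ hτ.1)).tendsto x).comp hu
  let E : Set 𝔼 := {x | AEStronglyMeasurable (fun τ => Cv (t - τ) (g τ) x) μ ∧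
    w x = w0 x + ∫ τ, Cv (t - τ) (g τ) x ∂μ}
  let D : Set 𝔼 := {x | w x = w0 x}
  have hD : IsClosed D := isClosed_eq hw hw0
  have hE : IsClosed E := by
    refine IsSeqClosed.isClosed fun u x hu hux => ⟨?_, ?_⟩
    · exact aestronglyMeasurable_of_tendsto_ae atTop (fun n => (hu n).1) (hc x u hux)
    · have h1 := tendsto_integral_of_dominated_convergence (fun _ => M) (fun n => (hu n).1)
        (integrable_const M) (fun n => hb (u n)) (hc x u hux)
      have h2 := ((hw0.tendsto x).comp hux).add h1
      refine tendsto_nhds_unique ((hw.tendsto x).comp hux) (h2.congr fun n => ?_)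
      exact ((hu n).2).symm
  have hED : E ∪ D = Set.univ := by
    have hdense : Dense (E ∪ D) := by
      refine Dense.mono ?_ (Measure.dense_of_ae hf)
      intro x hx
      by_cases hA : AEStronglyMeasurable (fun τ => Cv (t - τ) (g τ) x) μ
      · left; exact ⟨hA, hx⟩
      · right
        have hx' : w x = w0 x + ∫ τ, Cv (t - τ) (g τ) x ∂μ := hx
        rw [integral_undef (fun h => hA h.1), add_zero] at hx'
        exact hx'
    rw [← hdense.closure_eq, (hE.union hD).closure_eq]
  by_cases hEe : E.Nonempty
  · by_cases hDe : D.Nonempty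
    · left
      obtain ⟨x0, -, hx0E, hx0D⟩ := isPreconnected_closed_iff.1
        (isPreconnected_univ (α := 𝔼)) E D hE hD hED.ge
        (by simpa using hEe) (by simpa using hDe)
      have h0 : ∫ τ, Cv (t - τ) (g τ) x0 ∂μ = 0 := by
        have h1 := hx0E.2
        have h2 : w x0 = w0 x0 := hx0D
        linarith
      rw [integral_eq_zero_iff_of_nonneg_ae] at h0
      · intro x
        refine AEStronglyMeasurable.congr (f := fun _ => (0:ℝ)) aestronglyMeasurable_const ?_
        filter_upwards [ae_Ioo t, h0] with τ hτ h
        exact (Cv_zero (by linarith [hτ.2]) (hg τ hτ.1) (hg0 τ) x0 h x).symm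
      · filter_upwards [ae_Ioo t] with τ hτ
        exact Cv_nonneg (by linarith [hτ.2]) (hg0 τ) x0
      · exact (integrable_const M).mono' hx0E.1 (hb x0)
    · left
      rw [Set.not_nonempty_iff_eq_empty] at hDe
      rw [hDe, Set.union_empty] at hED
      intro x
      exact (hED.ge (Set.mem_univ x)).1
  · right
    rw [Set.not_nonempty_iff_eq_empty] at hEe
    rw [hEe, Set.empty_union] at hED
    funext x
    exact hED.ge (Set.mem_univ x)

theorem mass_identity {g : ℝ → 𝔼 → ℝ} (hg : ∀ τ, 0 < τ → Integrable (g τ))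
    (hg0 : ∀ τ x, 0 ≤ g τ x) {t : ℝ} (ht : 0 < t)
    (h : GoodT g t) (hφ : ∃ B : ℝ, ∀ τ, 0 < τ → ∫ x, g τ x ≤ B) :
    AEStronglyMeasurable (fun τ => ∫ x, g τ x) (volume.restrict (Set.Ioo 0 t)) ∧
    Integrable (fun x : 𝔼 => ∫ τ in (0:ℝ)..t, Cv (t - τ) (g τ) x) ∧
    ∫ x : 𝔼, (∫ τ in (0:ℝ)..t, Cv (t - τ) (g τ) x) = ∫ τ in Set.Ioo (0:ℝ) t, ∫ x, g τ x := by
  set μ := volume.restrict (Set.Ioo (0:ℝ) t) with hμ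
  have hintegral : ∀ x : 𝔼, (∫ τ in (0:ℝ)..t, Cv (t - τ) (g τ) x) = ∫ τ, Cv (t - τ) (g τ) x ∂μ := by
    intro x
    rw [intervalIntegral.integral_of_le ht.le, hμ, restrict_Ioo_eq_restrict_Ioc]
  simp_rw [hintegral]
  have hφm : AEStronglyMeasurable (fun τ => ∫ x, g τ x) μ := by
    refine (Complex.continuous_re.comp_aestronglyMeasurable (h 0)).congr ?_
    refine Eventually.of_forall fun τ => ?_
    simp only [Real.fourier_eq, inner_zero_right, neg_zero, AddChar.map_zero_eq_one, one_smul]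
    rw [integral_complex_ofReal]
    simp
  obtain ⟨B, hB⟩ := hφ
  have hφi : Integrable (fun τ => ∫ x, g τ x) μ := by
    refine (integrable_const B).mono' hφm ?_
    filter_upwards [ae_Ioo t] with τ hτ
    rw [Real.norm_of_nonneg (integral_nonneg (hg0 τ))]
    exact hB τ hτ.1
  obtain ⟨f', hf', hff⟩ := carath μ (fun (x : 𝔼) τ => Cv (t - τ) (g τ) x)
    (by
      filter_upwards [ae_Ioo t] with τ hτ
      exact Cv_cont (by linarith [hτ.2]) (hg τ hτ.1)) (meas_of_good hg h)
  have hx : ∀ x, ∫ τ, Cv (t - τ) (g τ) x ∂μ = ∫ τ, f' x τ ∂μ := by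
    intro x
    refine integral_congr_ae ?_
    filter_upwards [hff] with τ hτ
    exact hτ x
  simp_rw [hx]
  have hτ : ∀ᵐ τ ∂μ, Integrable (fun x => f' x τ) ∧ (∫ x, f' x τ) = ∫ x, g τ x ∧
      (∫ x, ‖f' x τ‖) = ∫ x, g τ x := by
    filter_upwards [ae_Ioo t, hff] with τ hτ h1
    have h2 : (fun x => f' x τ) = Cv (t - τ) (g τ) := by ext x; exact (h1 x).symm
    have h3 : ∀ x, ‖f' x τ‖ = f' x τ := by
      intro x
      rw [← h1 x, Real.norm_of_nonneg (Cv_nonneg (by linarith [hτ.2]) (hg0 τ) x)]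
    simp_rw [h3]
    rw [h2]
    have := Cv_integral (s := t - τ) (by linarith [hτ.2]) (hg τ hτ.1)
    exact ⟨Cv_int (by linarith [hτ.2]) (hg τ hτ.1), this, this⟩
  have hpi : Integrable (Function.uncurry f') (volume.prod μ) := by
    rw [integrable_prod_iff' hf'.aestronglyMeasurable]
    constructor
    · filter_upwards [hτ] with τ h1; exact h1.1
    · refine hφi.congr ?_
      filter_upwards [hτ] with τ h1; exact h1.2.2.symm
  refine ⟨hφm, hpi.integral_prod_left, ?_⟩
  rw [integral_integral_swap hpi]
  refine integral_congr_ae ?_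
  filter_upwards [hτ] with τ h1; exact h1.2.1

end boot

section fin
variable {N : ℕ}
local notation "𝔼" => EuclideanSpace ℝ (Fin N)

theorem tail_bound {I : ℝ → ℝ≥0∞} {K a : ℝ} (hK : 0 ≤ K) (ha : 0 < a)
    (hI : ∀ τ, 0 < τ → I τ ≤ ENNReal.ofReal (K * (1 + τ) ^ (-(a + 1)))) (t : ℝ) (ht : 1 ≤ t) :
    ∫⁻ τ in Set.Ioi t, I τ ≤ ENNReal.ofReal (K / a * t ^ (-a)) := by
  have ht0 : 0 < t := by linarith
  have hintegral : IntegrableOn (fun τ : ℝ => K * τ ^ (-(a + 1))) (Set.Ioi t) :=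
    (integrableOn_Ioi_rpow_of_lt (by linarith) ht0).const_mul K
  have h1 : ∫ τ in Set.Ioi t, K * τ ^ (-(a + 1)) = K / a * t ^ (-a) := by
    rw [integral_const_mul, integral_Ioi_rpow_of_lt (by linarith) ht0]
    have : -(a + 1) + 1 = -a := by ring
    rw [this]
    field_simp
  rw [← h1, ofReal_integral_eq_lintegral_ofReal hintegral]
  · refine setLIntegral_mono' measurableSet_Ioi fun τ hτ => ?_
    have hτ : t < τ := hτ
    refine (hI τ (by linarith)).trans (ENNReal.ofReal_le_ofReal ?_)
    refine mul_le_mul_of_nonneg_left ?_ hK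
    exact Real.rpow_le_rpow_of_nonpos (by linarith) (by linarith) (by linarith)
  · refine (ae_restrict_iff' measurableSet_Ioi).2 (Eventually.of_forall fun τ hτ => ?_)
    have hτ : t < τ := hτ
    have : 0 < τ := by linarith
    simp only [Pi.zero_apply]
    positivity

theorem total_bound {I : ℝ → ℝ≥0∞} {K a : ℝ} (hK : 0 ≤ K) (ha : 0 < a)
    (hI : ∀ τ, 0 < τ → I τ ≤ ENNReal.ofReal (K * (1 + τ) ^ (-(a + 1)))) :
    ∫⁻ τ in Set.Ioi (0:ℝ), I τ ≠ ⊤ := by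
  rw [← Set.Ioc_union_Ioi_eq_Ioi (zero_le_one (α := ℝ)), lintegral_union measurableSet_Ioi
    (Set.Ioc_disjoint_Ioi le_rfl)]
  refine ENNReal.add_ne_top.2 ⟨?_, ne_top_of_le_ne_top ENNReal.ofReal_ne_top
    (tail_bound hK ha hI 1 le_rfl)⟩
  refine ne_top_of_le_ne_top (b := ∫⁻ τ in Set.Ioc (0:ℝ) 1, ENNReal.ofReal K) ?_ ?_
  · simp
  · refine setLIntegral_mono' measurableSet_Ioc fun τ hτ => ?_
    refine (hI τ hτ.1).trans (ENNReal.ofReal_le_ofReal ?_)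
    refine mul_le_of_le_one_right hK ?_
    exact Real.rpow_le_one_of_one_le_of_nonpos (by linarith [hτ.1]) (by linarith)

theorem Lp_bound {p : ℝ} (hp : 1 < p) (v : 𝔼 → ℝ → ℝ)
    (hdecay1 : ∀ q : ℝ≥0∞, 1 ≤ q →
        ∃ M : ℝ≥0∞, M ≠ ⊤ ∧ ∀ t : ℝ, 0 < t →
          ENNReal.ofReal ((1 + t) ^ ((N : ℝ) * (1 - (1 / q).toReal) + 1))
            * eLpNorm (fun x => ‖gradient (fun z => v z t) x‖) q volume ≤ M) :
    ∃ K : ℝ, 0 ≤ K ∧ ∀ τ : ℝ, 0 < τ →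
      ∫⁻ x : 𝔼, ENNReal.ofReal (‖gradient (fun z => v z τ) x‖ ^ p) ≤
        ENNReal.ofReal (K * (1 + τ) ^ (-(((N : ℝ) + 1) * (p - 1) + 1))) := by
  have hp0 : 0 < p := by linarith
  obtain ⟨M, hM, h⟩ := hdecay1 (ENNReal.ofReal p) (by simpa using hp.le)
  refine ⟨M.toReal ^ p, by positivity, fun τ hτ => ?_⟩
  have h1 := h τ hτ
  have h2 : (1 / ENNReal.ofReal p).toReal = 1 / p := by
    rw [ENNReal.toReal_div, ENNReal.toReal_ofReal hp0.le]; simp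
  rw [h2] at h1
  have hr : (0:ℝ) < (1 + τ) ^ ((N : ℝ) * (1 - 1 / p) + 1) := by positivity
  have h3 : ∫⁻ x : 𝔼, ENNReal.ofReal (‖gradient (fun z => v z τ) x‖ ^ p) =
      (eLpNorm (fun x => ‖gradient (fun z => v z τ) x‖) (ENNReal.ofReal p) volume) ^ p := by
    rw [eLpNorm_eq_lintegral_rpow_enorm_toReal (by simpa using hp0) ENNReal.ofReal_ne_top,
      ENNReal.toReal_ofReal hp0.le, ← ENNReal.rpow_mul, one_div_mul_cancel hp0.ne',
      ENNReal.rpow_one]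
    refine lintegral_congr fun x => ?_
    rw [← ENNReal.ofReal_rpow_of_nonneg (norm_nonneg _) hp0.le, Real.enorm_eq_ofReal (norm_nonneg _)]
  rw [h3]
  have h4 : eLpNorm (fun x => ‖gradient (fun z => v z τ) x‖) (ENNReal.ofReal p) volume ≤
      ENNReal.ofReal (M.toReal * (1 + τ) ^ (-((N : ℝ) * (1 - 1 / p) + 1))) := by
    rw [Real.rpow_neg (by linarith), ← div_eq_mul_inv, ENNReal.ofReal_div_of_pos hr,
      ENNReal.ofReal_toReal hM]
    rw [ENNReal.le_div_iff_mul_le (by left; simpa using hr) (by left; simp), mul_comm]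
    exact h1
  refine (ENNReal.rpow_le_rpow h4 hp0.le).trans ?_
  rw [ENNReal.ofReal_rpow_of_nonneg (by positivity) hp0.le,
    Real.mul_rpow (by positivity) (by positivity), ← Real.rpow_mul (by linarith)]
  apply le_of_eq
  congr 3
  field_simp
  ring

theorem Linf_bound {p : ℝ} (hp : 1 < p) (v : 𝔼 → ℝ → ℝ)
    (hdecay1 : ∀ q : ℝ≥0∞, 1 ≤ q →
        ∃ M : ℝ≥0∞, M ≠ ⊤ ∧ ∀ t : ℝ, 0 < t →
          ENNReal.ofReal ((1 + t) ^ ((N : ℝ) * (1 - (1 / q).toReal) + 1))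
            * eLpNorm (fun x => ‖gradient (fun z => v z t) x‖) q volume ≤ M) :
    ∃ K : ℝ, ∀ τ : ℝ, 0 < τ → ∀ᵐ x : 𝔼, ‖gradient (fun z => v z τ) x‖ ^ p ≤ K := by
  obtain ⟨M, hM, h⟩ := hdecay1 ⊤ le_top
  refine ⟨M.toReal ^ p, fun τ hτ => ?_⟩
  have h1 := h τ hτ
  rw [eLpNorm_exponent_top] at h1
  filter_upwards [ae_le_eLpNormEssSup (μ := (volume : Measure 𝔼))
    (f := fun x : 𝔼 => ‖gradient (fun z => v z τ) x‖)] with x hx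
  refine Real.rpow_le_rpow (norm_nonneg _) ?_ (by linarith)
  rw [Real.enorm_eq_ofReal (norm_nonneg _)] at hx
  rw [← ENNReal.ofReal_le_iff_le_toReal hM]
  refine hx.trans (le_trans ?_ h1)
  refine le_mul_of_one_le_left (zero_le) ?_
  rw [ENNReal.one_le_ofReal]
  refine Real.one_le_rpow (by linarith) ?_
  simp
  positivity

end fin

theorem stmt_17 (N : ℕ) (hN : 1 ≤ N) (p : ℝ) (hp : 1 < p)
    (u0 : EuclideanSpace ℝ (Fin N) → ℝ) (hu0 : Integrable u0 volume)
    (v : EuclideanSpace ℝ (Fin N) → ℝ → ℝ)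
    (hdiff : ∀ t : ℝ, 0 < t → Differentiable ℝ (fun x => v x t))
    (hmild : ∀ t : ℝ, 0 < t → ∀ᵐ x ∂(volume : Measure (EuclideanSpace ℝ (Fin N))),
        v x t = (∫ y, Pt N t (x - y) * u0 y)
          + ∫ τ in (0:ℝ)..t, ∫ y, Pt N (t - τ) (x - y)
              * ‖gradient (fun z => v z τ) y‖ ^ p)
    (hdecay0 : ∀ q : ℝ≥0∞, 1 ≤ q →
        ∃ M : ℝ≥0∞, M ≠ ⊤ ∧ ∀ t : ℝ, 0 < t →
          ENNReal.ofReal ((1 + t) ^ ((N : ℝ) * (1 - (1 / q).toReal)))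
            * eLpNorm (fun x => v x t) q volume ≤ M)
    (hdecay1 : ∀ q : ℝ≥0∞, 1 ≤ q →
        ∃ M : ℝ≥0∞, M ≠ ⊤ ∧ ∀ t : ℝ, 0 < t →
          ENNReal.ofReal ((1 + t) ^ ((N : ℝ) * (1 - (1 / q).toReal) + 1))
            * eLpNorm (fun x => ‖gradient (fun z => v z t) x‖) q volume ≤ M) :
    (∫⁻ τ in Set.Ioi (0:ℝ), ∫⁻ x : EuclideanSpace ℝ (Fin N),
        ENNReal.ofReal (‖gradient (fun z => v z τ) x‖ ^ p)) ≠ ⊤ ∧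
    ∃ C : ℝ, 0 < C ∧ ∀ t : ℝ, 1 ≤ t →
      |(∫ x, v x t) - ((∫ x, u0 x)
          + (∫⁻ τ in Set.Ioi (0:ℝ), ∫⁻ x : EuclideanSpace ℝ (Fin N),
              ENNReal.ofReal (‖gradient (fun z => v z τ) x‖ ^ p)).toReal)|
        ≤ C * t ^ (-(((N : ℝ) + 1) * (p - 1))) := by
  have hp0 : 0 < p := by linarith
  obtain ⟨K, hK, hI⟩ := Lp_bound hp v hdecay1
  obtain ⟨M, hM⟩ := Linf_bound hp v hdecay1
  have ha : 0 < ((N : ℝ) + 1) * (p - 1) := mul_pos (by positivity) (by linarith)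
  have hfin := total_bound hK ha hI
  refine ⟨hfin, K / (((N : ℝ) + 1) * (p - 1)) + 1, by positivity, fun t ht => ?_⟩
  have ht0 : 0 < t := by linarith
  let g : ℝ → EuclideanSpace ℝ (Fin N) → ℝ := fun τ y => ‖gradient (fun z => v z τ) y‖ ^ p
  have hg0 : ∀ τ x, 0 ≤ g τ x := fun τ x => by positivity
  have hgm : ∀ τ, AEStronglyMeasurable (g τ) volume := by
    intro τ
    have h1 : g τ = fun y => ‖fderiv ℝ (fun z => v z τ) y‖ ^ p := by
      funext y
      simp only [g, norm_gradient_eq]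
    rw [h1]
    exact ((measurable_fderiv ℝ _).norm.pow_const p).aestronglyMeasurable
  have hg : ∀ τ, 0 < τ → Integrable (g τ) := by
    intro τ hτ
    refine ⟨hgm τ, ?_⟩
    rw [hasFiniteIntegral_iff_ofReal (Eventually.of_forall (hg0 τ))]
    exact (hI τ hτ).trans_lt ENNReal.ofReal_lt_top
  have hφ : ∀ τ, ∫ x, g τ x = (∫⁻ x, ENNReal.ofReal (g τ x)).toReal := fun τ =>
    integral_eq_lintegral_of_nonneg_ae (Eventually.of_forall (hg0 τ)) (hgm τ)
  have hmild' : ∀ s : ℝ, 0 < s → ∀ᵐ x, v x s = Cv s u0 x +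
      ∫ τ in (0:ℝ)..s, Cv (s - τ) (g τ) x := hmild
  have hgood : GoodT g t := by
    refine bootstrap hg hu0 p (fun s hs => ?_) t
    rcases dichotomy hg hg0 hM hs (hdiff s hs).continuous (Cv_cont hs hu0) (hmild' s hs) with h | h
    · left; exact h
    · right
      funext x
      simp only [g, h]
  have hB : ∃ B : ℝ, ∀ τ, 0 < τ → ∫ x, g τ x ≤ B := by
    refine ⟨K, fun τ hτ => ?_⟩
    rw [hφ τ]
    refine ENNReal.toReal_le_of_le_ofReal hK ((hI τ hτ).trans (ENNReal.ofReal_le_ofReal ?_))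
    refine mul_le_of_le_one_right hK ?_
    exact Real.rpow_le_one_of_one_le_of_nonpos (by linarith) (by linarith)
  obtain ⟨hm1, hm2, hm3⟩ := mass_identity hg hg0 ht0 hgood hB
  have hv : ∫ x, v x t = (∫ x, u0 x) + ∫ τ in Set.Ioo (0:ℝ) t, ∫ x, g τ x := by
    rw [integral_congr_ae (hmild' t ht0), integral_add (Cv_int ht0 hu0) hm2, hm3,
      Cv_integral ht0 hu0]
  have h1 : ∫ τ in Set.Ioo (0:ℝ) t, ∫ x, g τ x =
      (∫⁻ τ in Set.Ioc (0:ℝ) t, ∫⁻ x, ENNReal.ofReal (g τ x)).toReal := by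
    rw [integral_eq_lintegral_of_nonneg_ae
      (Eventually.of_forall fun τ => integral_nonneg (hg0 τ)) hm1, restrict_Ioo_eq_restrict_Ioc]
    congr 1
    refine setLIntegral_congr_fun measurableSet_Ioc fun τ hτ => ?_
    rw [hφ τ, ENNReal.ofReal_toReal]
    exact ne_top_of_le_ne_top ENNReal.ofReal_ne_top (hI τ hτ.1)
  have htail := tail_bound hK ha hI t ht
  have hsplit : (∫⁻ τ in Set.Ioi (0:ℝ), ∫⁻ x : EuclideanSpace ℝ (Fin N),
        ENNReal.ofReal (‖gradient (fun z => v z τ) x‖ ^ p)) =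
      (∫⁻ τ in Set.Ioc (0:ℝ) t, ∫⁻ x, ENNReal.ofReal (g τ x)) +
      (∫⁻ τ in Set.Ioi t, ∫⁻ x, ENNReal.ofReal (g τ x)) := by
    rw [← Set.Ioc_union_Ioi_eq_Ioi ht0.le, lintegral_union measurableSet_Ioi
      (Set.Ioc_disjoint_Ioi le_rfl)]
  rw [hsplit] at hfin
  obtain ⟨hf1, hf2⟩ := ENNReal.add_ne_top.1 hfin
  rw [hv, h1, hsplit, ENNReal.toReal_add hf1 hf2]
  have hT : (∫⁻ τ in Set.Ioi t, ∫⁻ x, ENNReal.ofReal (g τ x)).toReal ≤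
      K / (((N : ℝ) + 1) * (p - 1)) * t ^ (-(((N : ℝ) + 1) * (p - 1))) :=
    ENNReal.toReal_le_of_le_ofReal (by positivity) htail
  have hT0 : 0 ≤ (∫⁻ τ in Set.Ioi t, ∫⁻ x, ENNReal.ofReal (g τ x)).toReal :=
    ENNReal.toReal_nonneg
  have hpow : 0 ≤ t ^ (-(((N : ℝ) + 1) * (p - 1))) := by positivity
  rw [abs_le]
  constructor <;> nlinarith
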